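/- There is a universal constant C > 0 with the following property. Let s ↦ H(s) be a differentiable family of Hermitian operators on a finite-dimensional complex Hilbert space such that for every s the spectrum of H(s) decomposes as Σ(s) ∪ Σ'(s) with Σ(s) ⊂ [a,b] and dist(Σ'(s), [a,b]) ≥ γ for fixed a ≤ b and γ > 0, and let P(s) be the spectral projection of H(s) onto Σ(s), assumed differentiable in s. Then ‖Ṗ(s)‖ ≤ C ‖Ḣ(s)‖ / γ for all s, where ‖·‖ is the operator norm. -/

import Mathlib

/-!
Differentiating `P² = P` shows that `Ṗ` is off-diagonal with respect to `P`; being self-adjoint, it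
has the same norm as its block `ṖP`. Centre the spectral cluster by replacing `H` with `K = H - c`,
where `c` is the midpoint of `[a, b]` and `r` its half-length. Differentiating `KP = PK` gives the
Sylvester equation `K(ṖP) - (ṖP)(KP) = -(1 - P)ḢP` for this block. Here `KP` has norm at most `r`,
whereas `K` is bounded below by `r + γ` on the range of `1 - P`, which contains the range of `ṖP`;
hence `(r + γ)‖ṖP‖ ≤ r‖ṖP‖ + ‖Ḣ‖`. The argument gives the constant `1`.
-/

section Ring

variable {A : Type*} [Ring A] {d e : A}

lemma one_sub_mul_mul_of_eq_mul_add_mul (he : IsIdempotentElem e) (hd : d = d * e + e * d) :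
    (1 - e) * (d * e) = d * e := by
  have h_corner : e * d * e = 0 := by
    have h : e * d * e = e * d * e + e * d * e := by
      calc e * d * e = e * (d * e + e * d) * e := by rw [← hd]
        _ = e * d * (e * e) + e * e * d * e := by noncomm_ring
        _ = e * d * e + e * d * e := by rw [he.eq]
    exact left_eq_add.mp h
  rw [sub_mul, one_mul, ← mul_assoc, h_corner, sub_zero]

lemma mul_mul_sub_mul_mul_eq_of_isIdempotentElem {h h' : A} (he : IsIdempotentElem e)
    (hhe : Commute h e) (hd : h' * e + h * d = d * h + e * h') :
    h * (d * e) - d * e * (h * e) = -((1 - e) * h' * e) := by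
  have h_range : h * e = e * (h * e) := by rw [hhe.eq, ← mul_assoc, he.eq]
  calc h * (d * e) - d * e * (h * e)
      = (h' * e + h * d) * e - h' * (e * e) - d * (e * (h * e)) := by noncomm_ring
    _ = (d * h + e * h') * e - h' * e - d * (h * e) := by rw [hd, he.eq, ← h_range]
    _ = -((1 - e) * h' * e) := by noncomm_ring

end Ring

lemma norm_le_div_of_sylvester {A : Type*} [NonUnitalSeminormedRing A] {k f g x y : A} {r γ : ℝ}
    (hγ : 0 < γ) (hxy : k * x - x * f = y) (hgk : g * (k * x) = x) (hf : ‖f‖ ≤ r)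
    (hg : ‖g‖ ≤ (r + γ)⁻¹) : ‖x‖ ≤ ‖y‖ / γ := by
  have hrγ : 0 < r + γ := add_pos_of_nonneg_of_pos ((norm_nonneg f).trans hf) hγ
  have h_norm : ‖x‖ ≤ (r + γ)⁻¹ * (‖x‖ * r + ‖y‖) := by
    calc ‖x‖ = ‖g * (x * f + y)‖ := by rw [← hxy, add_sub_cancel, hgk]
      _ ≤ ‖g‖ * (‖x‖ * ‖f‖ + ‖y‖) :=
        (norm_mul_le _ _).trans (by gcongr; exact norm_add_le_of_le (norm_mul_le _ _) le_rfl)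
      _ ≤ (r + γ)⁻¹ * (‖x‖ * r + ‖y‖) := by gcongr
  rw [le_inv_mul_iff₀ hrγ] at h_norm
  rw [le_div_iff₀ hγ]
  linarith

lemma norm_add_star_of_mul_self_eq_zero {A : Type*} [NonUnitalCStarAlgebra A] {x : A}
    (hx : x * x = 0) : ‖x + star x‖ = ‖x‖ := by
  have h_orth : star x * x * (x * star x) = 0 := by
    rw [mul_assoc, ← mul_assoc x x, hx, zero_mul, mul_zero]
  have h_sq : star (x + star x) * (x + star x) = star x * x + x * star x := by
    have hx_star : star x * star x = 0 := by rw [← star_mul, hx, star_zero]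
    rw [star_add, star_star, add_mul, mul_add, mul_add, hx, hx_star, zero_add, add_zero]
  rw [← mul_self_inj (norm_nonneg _) (norm_nonneg _), ← CStarRing.norm_star_mul_self, h_sq,
    (IsSelfAdjoint.star_mul_self x).norm_add_eq_max (IsSelfAdjoint.mul_star_self x) h_orth,
    CStarRing.norm_star_mul_self, CStarRing.norm_self_mul_star, max_self]

lemma norm_mul_eq_norm_of_eq_mul_add_mul {A : Type*} [CStarAlgebra A] {d e : A}
    (he : IsStarProjection e) (hd_self : IsSelfAdjoint d) (hd : d = d * e + e * d) :
    ‖d * e‖ = ‖d‖ := by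
  have h_sq : d * e * (d * e) = 0 := by
    calc d * e * (d * e) = d * e * ((1 - e) * (d * e)) := by
          rw [one_sub_mul_mul_of_eq_mul_add_mul he.isIdempotentElem hd]
      _ = d * (e * (1 - e)) * (d * e) := by noncomm_ring
      _ = 0 := by rw [he.mul_one_sub_self, mul_zero, zero_mul]
  have h_star : star (d * e) = e * d := by
    rw [star_mul, he.isSelfAdjoint.star_eq, hd_self.star_eq]
  rw [← norm_add_star_of_mul_self_eq_zero h_sq, h_star, ← hd]

section Derivative

open Filter Topology

section NormedAlgebra

variable {𝕜 A : Type*} [NontriviallyNormedField 𝕜] [NormedRing A] [NormedAlgebra 𝕜 A]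
  {P : 𝕜 → A} {P' : A} {s : 𝕜}

lemma eq_mul_add_mul_of_hasDerivAt_isIdempotentElem (hP : HasDerivAt P P' s)
    (h_idem : ∀ᶠ t in 𝓝 s, IsIdempotentElem (P t)) : P' = P' * P s + P s * P' :=
  hP.unique <| (hP.mul hP).congr_of_eventuallyEq (h_idem.mono fun _ ht ↦ ht.eq.symm)

lemma mul_add_mul_eq_of_hasDerivAt_of_commute {H : 𝕜 → A} {H' : A} (hH : HasDerivAt H H' s)
    (hP : HasDerivAt P P' s) (h_comm : ∀ᶠ t in 𝓝 s, Commute (H t) (P t)) :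
    H' * P s + H s * P' = P' * H s + P s * H' :=
  (hH.mul hP).unique <| (hP.mul hH).congr_of_eventuallyEq (h_comm.mono fun _ ht ↦ ht.eq)

end NormedAlgebra

lemma isSelfAdjoint_of_hasDerivAt {𝕜 F : Type*} [NontriviallyNormedField 𝕜] [StarRing 𝕜]
    [TrivialStar 𝕜] [NormedAddCommGroup F] [NormedSpace 𝕜 F] [StarAddMonoid F] [StarModule 𝕜 F]
    [ContinuousStar F] {f : 𝕜 → F} {f' : F} {s : 𝕜} (hf : HasDerivAt f f' s)
    (h_self : ∀ᶠ t in 𝓝 s, IsSelfAdjoint (f t)) : IsSelfAdjoint f' :=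
  (hf.star.congr_of_eventuallyEq (h_self.mono fun _ ht ↦ ht.star_eq.symm)).unique hf

lemma norm_le_div_of_hasDerivAt_isStarProjection {A : Type*} [CStarAlgebra A] {H P : ℝ → A}
    {H' P' R : A} {s r γ : ℝ} (hγ : 0 < γ) (hH : HasDerivAt H H' s) (hP : HasDerivAt P P' s)
    (h_proj : ∀ᶠ t in 𝓝 s, IsStarProjection (P t)) (h_comm : ∀ᶠ t in 𝓝 s, Commute (H t) (P t))
    (h_cluster : ‖H s * P s‖ ≤ r) (hRH : R * H s = 1 - P s) (hR : ‖R‖ ≤ (r + γ)⁻¹) :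
    ‖P'‖ ≤ ‖H'‖ / γ := by
  have hPs : IsStarProjection (P s) := h_proj.self_of_nhds
  have h_offDiag : P' = P' * P s + P s * P' :=
    eq_mul_add_mul_of_hasDerivAt_isIdempotentElem hP (h_proj.mono fun _ ht ↦ ht.isIdempotentElem)
  have hP'_self : IsSelfAdjoint P' :=
    isSelfAdjoint_of_hasDerivAt hP (h_proj.mono fun _ ht ↦ ht.isSelfAdjoint)
  have h_sylvester : H s * (P' * P s) - P' * P s * (H s * P s) = -((1 - P s) * H' * P s) :=
    mul_mul_sub_mul_mul_eq_of_isIdempotentElem hPs.isIdempotentElem h_comm.self_of_nhds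
      (mul_add_mul_eq_of_hasDerivAt_of_commute hH hP h_comm)
  have h_inv : R * (H s * (P' * P s)) = P' * P s := by
    rw [← mul_assoc, hRH, one_sub_mul_mul_of_eq_mul_add_mul hPs.isIdempotentElem h_offDiag]
  have h_source : ‖-((1 - P s) * H' * P s)‖ ≤ ‖H'‖ := by
    calc ‖-((1 - P s) * H' * P s)‖ ≤ ‖1 - P s‖ * ‖H'‖ * ‖P s‖ := by
          rw [norm_neg]
          exact norm_mul₃_le
      _ ≤ 1 * ‖H'‖ * 1 := by gcongr; exacts [hPs.one_sub.norm_le, hPs.norm_le]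
      _ = ‖H'‖ := by rw [one_mul, mul_one]
  calc ‖P'‖ = ‖P' * P s‖ := (norm_mul_eq_norm_of_eq_mul_add_mul hPs hP'_self h_offDiag).symm
    _ ≤ ‖-((1 - P s) * H' * P s)‖ / γ :=
      norm_le_div_of_sylvester hγ h_sylvester h_inv h_cluster hR
    _ ≤ ‖H'‖ / γ := by gcongr

end Derivative

section SpectralGap

open Metric Set

lemma add_le_dist_of_forall_mem_closedBall {E : Type*} [SeminormedAddCommGroup E] [NormedSpace ℝ E]
    {c x : E} {r γ : ℝ} (hr : 0 ≤ r) (hγ : 0 < γ) (h : ∀ y ∈ closedBall c r, γ ≤ dist x y) :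
    r + γ ≤ dist x c := by
  have hx : x ∉ thickening γ (closedBall c r) := fun hx ↦ by
    obtain ⟨y, hy, hxy⟩ := mem_thickening_iff.mp hx
    exact (h y hy).not_gt hxy
  rwa [thickening_closedBall hγ hr, mem_ball, not_lt, add_comm] at hx

lemma continuousOn_of_dist_gap {X Y : Type*} [PseudoMetricSpace X] [TopologicalSpace Y]
    {f : X → Y} {S T : Set X} {c : X} {r γ : ℝ} (hγ : 0 < γ) (hT : IsClosed T)
    (hS : S ⊆ closedBall c r) (h_gap : ∀ x ∈ T \ S, r + γ ≤ dist x c)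
    (hf_in : ContinuousOn f (T ∩ S)) (hf_out : ContinuousOn f (T \ S)) : ContinuousOn f T := by
  have h_in : T ∩ S = T ∩ closedBall c r := by
    refine Subset.antisymm (inter_subset_inter_right T hS) fun x hx ↦ ⟨hx.1, ?_⟩
    by_contra hxS
    linarith [h_gap x ⟨hx.1, hxS⟩, mem_closedBall.mp hx.2]
  have h_out : T \ S = T ∩ {x | r + γ ≤ dist x c} := by
    refine Subset.antisymm (fun x hx ↦ ⟨hx.1, h_gap x hx⟩) fun x hx ↦ ⟨hx.1, fun hxS ↦ ?_⟩
    linarith [mem_ofPred_eq ▸ hx.2, mem_closedBall.mp (hS hxS)]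
  rw [← inter_union_sdiff T S]
  refine hf_in.union_of_isClosed hf_out ?_ ?_
  · exact h_in ▸ hT.inter isClosed_closedBall
  · exact h_out ▸ hT.inter (isClosed_le continuous_const (continuous_id.dist continuous_const))

lemma continuousOn_indicator_const_of_dist_gap {X Y : Type*} [PseudoMetricSpace X]
    [TopologicalSpace Y] [Zero Y] {S T : Set X} {c : X} {r γ : ℝ} (y : Y) (hγ : 0 < γ)
    (hT : IsClosed T) (hS : S ⊆ closedBall c r) (h_gap : ∀ x ∈ T \ S, r + γ ≤ dist x c) :
    ContinuousOn (S.indicator fun _ ↦ y) T :=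
  continuousOn_of_dist_gap hγ hT hS h_gap
    (continuousOn_const.congr fun _ hx ↦ indicator_of_mem hx.2 _)
    (continuousOn_const.congr fun _ hx ↦ indicator_of_notMem hx.2 _)

lemma continuousOn_indicator_compl_inv_sub_of_dist_gap {𝕜 : Type*} [NormedField 𝕜] {S T : Set 𝕜}
    {c : 𝕜} {r γ : ℝ} (hr : 0 ≤ r) (hγ : 0 < γ) (hT : IsClosed T) (hS : S ⊆ closedBall c r)
    (h_gap : ∀ x ∈ T \ S, r + γ ≤ dist x c) :
    ContinuousOn (Sᶜ.indicator fun x ↦ (x - c)⁻¹) T := by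
  refine continuousOn_of_dist_gap hγ hT hS h_gap
    (continuousOn_const.congr fun _ hx ↦ indicator_of_notMem (notMem_compl_iff.mpr hx.2) _)
    (ContinuousOn.congr (f := fun x ↦ (x - c)⁻¹) ?_ fun _ hx ↦ indicator_of_mem hx.2 _)
  exact (continuousOn_id.sub continuousOn_const).inv₀ fun x hx ↦
    sub_ne_zero.mpr (dist_pos.mp ((add_pos_of_nonneg_of_pos hr hγ).trans_le (h_gap x hx)))

variable {𝕜 A : Type*} [RCLike 𝕜] {p : A → Prop} {S : Set 𝕜} {c : 𝕜} {r γ : ℝ} {a : A}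

section ContinuousFunctionalCalculus

variable [TopologicalSpace A] [Ring A] [StarRing A] [Algebra 𝕜 A]
  [ContinuousFunctionalCalculus 𝕜 A p]

/-- The spectral projection of `a` onto the part `S` of its spectrum. It is `0` by convention when
the indicator function of `S` is not continuous on the spectrum. -/
noncomputable def spectralProjection (S : Set 𝕜) (a : A) : A :=
  cfc (S.indicator fun _ ↦ (1 : 𝕜)) a

/-- The reduced resolvent of `a` at `c` relative to the part `S` of its spectrum: the inverse of
`a - c` on the range of `1 - spectralProjection S a`, extended by `0` to the complementary range. -/
noncomputable def reducedResolvent (S : Set 𝕜) (c : 𝕜) (a : A) : A :=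
  cfc (Sᶜ.indicator fun x ↦ (x - c)⁻¹) a

lemma isStarProjection_spectralProjection (S : Set 𝕜) (a : A) :
    IsStarProjection (spectralProjection S a) where
  isIdempotentElem := by
    by_cases hf : ContinuousOn (S.indicator fun _ ↦ (1 : 𝕜)) (spectrum 𝕜 a)
    · rw [IsIdempotentElem, spectralProjection, ← cfc_mul _ _ a hf hf]
      congr 1 with x
      by_cases hx : x ∈ S <;> simp [hx]
    · rw [spectralProjection, cfc_apply_of_not_continuousOn a hf]
      exact .zero
  isSelfAdjoint := by
    rw [IsSelfAdjoint, spectralProjection, ← cfc_star]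
    congr 1 with x
    by_cases hx : x ∈ S <;> simp [hx]

lemma commute_spectralProjection (S : Set 𝕜) (ha : p a) : Commute a (spectralProjection S a) := by
  simpa only [cfc_id 𝕜 a ha] using! cfc_commute_cfc id (S.indicator fun _ ↦ (1 : 𝕜)) a

lemma cfc_id_sub_const (c : 𝕜) (ha : p a) : cfc (fun x ↦ x - c) a = a - algebraMap 𝕜 A c := by
  rw [cfc_sub .., cfc_id' 𝕜 a, cfc_const c a]

lemma reducedResolvent_mul_sub_algebraMap (hr : 0 ≤ r) (hγ : 0 < γ) (ha : p a)
    (hS : S ⊆ closedBall c r) (h_gap : ∀ x ∈ spectrum 𝕜 a \ S, r + γ ≤ dist x c) :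
    reducedResolvent S c a * (a - algebraMap 𝕜 A c) = 1 - spectralProjection S a := by
  have h_closed : IsClosed (spectrum 𝕜 a) :=
    (ContinuousFunctionalCalculus.isCompact_spectrum (R := 𝕜) a).isClosed
  rw [reducedResolvent, spectralProjection, ← cfc_id_sub_const c ha,
    ← cfc_mul _ _ a (continuousOn_indicator_compl_inv_sub_of_dist_gap hr hγ h_closed hS h_gap),
    ← cfc_const_one 𝕜 a ha, ← cfc_sub _ _ a continuousOn_const
      (continuousOn_indicator_const_of_dist_gap 1 hγ h_closed hS h_gap)]
  refine cfc_congr fun x hx ↦ ?_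
  by_cases hxS : x ∈ S
  · simp [hxS]
  · have hxc : x - c ≠ 0 := sub_ne_zero.mpr (dist_pos.mp (by linarith [h_gap x ⟨hx, hxS⟩]))
    simp [hxS, hxc]

end ContinuousFunctionalCalculus

section IsometricContinuousFunctionalCalculus

variable [NormedRing A] [StarRing A] [NormedAlgebra 𝕜 A]
  [IsometricContinuousFunctionalCalculus 𝕜 A p]

lemma norm_sub_algebraMap_mul_spectralProjection_le (hr : 0 ≤ r) (hγ : 0 < γ) (ha : p a)
    (hS : S ⊆ closedBall c r) (h_gap : ∀ x ∈ spectrum 𝕜 a \ S, r + γ ≤ dist x c) :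
    ‖(a - algebraMap 𝕜 A c) * spectralProjection S a‖ ≤ r := by
  have h_closed : IsClosed (spectrum 𝕜 a) :=
    (ContinuousFunctionalCalculus.isCompact_spectrum (R := 𝕜) a).isClosed
  rw [spectralProjection, ← cfc_id_sub_const c ha,
    ← cfc_mul _ _ a (by fun_prop)
      (continuousOn_indicator_const_of_dist_gap 1 hγ h_closed hS h_gap)]
  refine norm_cfc_le hr fun x _ ↦ ?_
  by_cases hx : x ∈ S
  · simpa [hx, dist_eq_norm] using hS hx
  · simpa [hx] using hr

lemma norm_reducedResolvent_le (hr : 0 ≤ r) (hγ : 0 < γ)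
    (h_gap : ∀ x ∈ spectrum 𝕜 a \ S, r + γ ≤ dist x c) :
    ‖reducedResolvent S c a‖ ≤ (r + γ)⁻¹ := by
  have hrγ : 0 < r + γ := add_pos_of_nonneg_of_pos hr hγ
  refine norm_cfc_le (inv_nonneg.mpr hrγ.le) fun x hx ↦ ?_
  by_cases hxS : x ∈ S
  · simpa [hxS] using hrγ.le
  · simpa [hxS, ← dist_eq_norm] using inv_anti₀ hrγ (h_gap x ⟨hx, hxS⟩)

end IsometricContinuousFunctionalCalculus

end SpectralGap

open Metric in
theorem stmt_4_general {𝕜 A : Type*} [RCLike 𝕜] [CStarAlgebra A] [NormedAlgebra 𝕜 A]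
    {p : A → Prop} [IsometricContinuousFunctionalCalculus 𝕜 A p] {c : 𝕜} {r γ : ℝ}
    (hr : 0 ≤ r) (hγ : 0 < γ) {H H' P P' : ℝ → A} {S S' : ℝ → Set 𝕜}
    (hp : ∀ s, p (H s)) (hH : ∀ s, HasDerivAt H (H' s) s)
    (h_spec : ∀ s, spectrum 𝕜 (H s) = S s ∪ S' s)
    (hS : ∀ s, S s ⊆ closedBall c r) (hS' : ∀ s, ∀ x ∈ S' s, ∀ y ∈ closedBall c r, γ ≤ dist x y)
    (hP_eq : ∀ s, P s = spectralProjection (S s) (H s)) (hP : ∀ s, HasDerivAt P (P' s) s) (s : ℝ) :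
    ‖P' s‖ ≤ ‖H' s‖ / γ := by
  have h_gap : ∀ x ∈ spectrum 𝕜 (H s) \ S s, r + γ ≤ dist x c := fun x ⟨hx, hxS⟩ ↦
    add_le_dist_of_forall_mem_closedBall hr hγ <| hS' s x <| (h_spec s ▸ hx).resolve_left hxS
  refine norm_le_div_of_hasDerivAt_isStarProjection (R := reducedResolvent (S s) c (H s)) hγ
    ((hH s).sub_const (algebraMap 𝕜 A c)) (hP s) (.of_forall fun t ↦ ?_) (.of_forall fun t ↦ ?_)
    ?_ ?_ (norm_reducedResolvent_le hr hγ h_gap)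
  · exact hP_eq t ▸ isStarProjection_spectralProjection (S t) (H t)
  · rw [hP_eq t]
    exact (commute_spectralProjection (S t) (hp t)).sub_left (Algebra.commutes c _)
  · exact hP_eq s ▸ norm_sub_algebraMap_mul_spectralProjection_le hr hγ (hp s) (hS s) h_gap
  · exact hP_eq s ▸ reducedResolvent_mul_sub_algebraMap hr hγ (hp s) (hS s) h_gap

/-- There is a universal constant `C > 0` such that for any differentiable family of
Hermitian operators `H s` on a finite-dimensional complex Hilbert space whose spectrum
decomposes as `S s ∪ S' s` with `S s ⊆ [a,b]` and `dist (S' s, [a,b]) ≥ γ > 0`, the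
spectral projection `P s` of `H s` onto `S s` (assumed differentiable) satisfies
`‖Ṗ s‖ ≤ C ‖Ḣ s‖ / γ`. -/
theorem stmt_4.{u} :
    ∃ C : ℝ, 0 < C ∧
      ∀ (𝓗 : Type u) [NormedAddCommGroup 𝓗] [InnerProductSpace ℂ 𝓗]
        [FiniteDimensional ℂ 𝓗]
        (a b γ : ℝ), a ≤ b → 0 < γ →
      ∀ (H H' P P' : ℝ → 𝓗 →L[ℂ] 𝓗) (S S' : ℝ → Set ℝ),
        (∀ s, IsSelfAdjoint (H s)) →
        (∀ s, HasDerivAt H (H' s) s) →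
        (∀ s, spectrum ℝ (H s) = S s ∪ S' s) →
        (∀ s, S s ⊆ Set.Icc a b) →
        (∀ s, ∀ x ∈ S' s, ∀ y ∈ Set.Icc a b, γ ≤ |x - y|) →
        (∀ s, P s = cfc (Set.indicator (S s) fun _ => (1:ℝ)) (H s)) →
        (∀ s, HasDerivAt P (P' s) s) →
        ∀ s, ‖P' s‖ ≤ C * ‖H' s‖ / γ := by
  refine ⟨1, one_pos, fun 𝓗 _ _ _ a b γ hab hγ H H' P P' S S' hsa hH h_spec hS hS' hP_eq hP s ↦ ?_⟩
  rw [Real.Icc_eq_closedBall] at hS hS'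
  rw [one_mul]
  exact stmt_4_general (by linarith) hγ hsa hH h_spec hS hS' hP_eq hP s
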